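/- Let X be a compact Hausdorff space admitting a continuous extension operator u : PM → PM(X). Then there exists a continuous map Ψ : (X × X) ∖ Δ_X → PM(X) such that Ψ_{(x,y)}(x,y) = 1 for all (x,y) ∈ (X × X) ∖ Δ_X; namely, Ψ_{(x,y)} = u(v_{(x,y)}) where v_{(x,y)} is the pseudometric on the two-point set {x,y} with v_{(x,y)}(x,y) = 1. -/

import Mathlib

/- STATEMENT 13: Let X be a compact Hausdorff space admitting a continuous
   extension operator u : PM → PM(X).  Then there exists a continuous map
   Ψ : (X × X) ∖ Δ_X → PM(X) with Ψ_{(x,y)}(x,y) = 1 for all (x,y) off the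
   diagonal; namely Ψ_{(x,y)} = u(v_{(x,y)}), where v_{(x,y)} is the
   pseudometric on the two-point set {x,y} with v_{(x,y)}(x,y) = 1. -/
open TopologicalSpace Set

noncomputable section

/-- The Vietoris topology on subsets of a topological space, generated by the
sets `{K | K ⊆ U}` and `{K | (K ∩ U).Nonempty}` for `U` open. -/
def vietoris (Y : Type*) [TopologicalSpace Y] : TopologicalSpace (Set Y) :=
  TopologicalSpace.generateFrom
    {S | ∃ U : Set Y, IsOpen U ∧ (S = {K | K ⊆ U} ∨ S = {K : Set Y | (K ∩ U).Nonempty})}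

/-- A partial continuous pseudometric on the space `X`: a continuous
pseudometric whose domain is a nonempty closed subset of `X`.  (Only the
values of `d` on `dom × dom` are relevant.) -/
structure PartialCPM (X : Type*) [TopologicalSpace X] where
  dom : Set X
  dom_ne : dom.Nonempty
  dom_closed : IsClosed dom
  d : X → X → ℝ
  refl : ∀ x ∈ dom, d x x = 0
  symm : ∀ x ∈ dom, ∀ y ∈ dom, d x y = d y x
  triangle : ∀ x ∈ dom, ∀ y ∈ dom, ∀ z ∈ dom, d x z ≤ d x y + d y z
  cont : ContinuousOn (fun p : X × X => d p.1 p.2) (dom ×ˢ dom)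

/-- A continuous pseudometric on (all of) the space `X`. -/
structure CPM (X : Type*) [TopologicalSpace X] where
  d : X → X → ℝ
  refl : ∀ x, d x x = 0
  symm : ∀ x y, d x y = d y x
  triangle : ∀ x y z, d x z ≤ d x y + d y z
  cont : Continuous fun p : X × X => d p.1 p.2

variable {X : Type*} [TopologicalSpace X]

/-- The graph of a partial pseudometric, a subset of `X × X × ℝ`. -/
def PartialCPM.graph (ρ : PartialCPM X) : Set (X × X × ℝ) :=
  {p | p.1 ∈ ρ.dom ∧ p.2.1 ∈ ρ.dom ∧ p.2.2 = ρ.d p.1 p.2.1}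

/-- PM is topologized via graphs in `exp (X × X × ℝ)` (Vietoris topology). -/
instance : TopologicalSpace (PartialCPM X) :=
  TopologicalSpace.induced PartialCPM.graph (vietoris (X × X × ℝ))

/-- The graph of a continuous pseudometric on `X`. -/
def CPM.graph (ρ : CPM X) : Set (X × X × ℝ) :=
  {p | p.2.2 = ρ.d p.1 p.2.1}

/-- PM(X) is topologized via graphs in `exp (X × X × ℝ)` (Vietoris topology). -/
instance : TopologicalSpace (CPM X) :=
  TopologicalSpace.induced CPM.graph (vietoris (X × X × ℝ))

open Classical in
/-- The two-point pseudometric `v_{(x,y)}`. -/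
def twoPt [T1Space X] (p : X × X) : PartialCPM X where
  dom := {p.1, p.2}
  dom_ne := ⟨p.1, by simp⟩
  dom_closed := (Set.toFinite _).isClosed
  d a b := if a = b then 0 else 1
  refl x _ := by simp
  symm x _ y _ := by simp only [eq_comm]
  triangle x _ y _ z _ := by
    by_cases h1 : x = y <;> by_cases h2 : y = z <;> by_cases h3 : x = z <;>
      simp_all
  cont := ((Set.toFinite _).prod (Set.toFinite _)).continuousOn _

theorem twoPt_graph [T1Space X] (p : X × X) (h : p.1 ≠ p.2) :
    (twoPt p).graph =
      {(p.1, p.1, (0 : ℝ)), (p.1, p.2, 1), (p.2, p.1, 1), (p.2, p.2, 0)} := by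
  ext ⟨a, b, r⟩
  simp only [PartialCPM.graph, twoPt, Set.mem_ofPred_eq, Set.mem_insert_iff,
    Set.mem_singleton_iff, Prod.mk.injEq]
  constructor
  · rintro ⟨rfl | rfl, rfl | rfl, hr⟩ <;> simp [h, h.symm] at hr ⊢ <;> exact hr
  · rintro (⟨rfl, rfl, rfl⟩ | ⟨rfl, rfl, rfl⟩ | ⟨rfl, rfl, rfl⟩ | ⟨rfl, rfl, rfl⟩) <;>
      simp [h, h.symm]

theorem twoPt_continuous [T1Space X] :
    Continuous (fun p : {p : X × X // p.1 ≠ p.2} => twoPt p.1) := by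
  refine continuous_induced_rng.2 (continuous_generateFrom_iff.2 ?_)
  have e1 : Continuous fun p : {p : X × X // p.1 ≠ p.2} => (p.1.1, p.1.1, (0 : ℝ)) := by
    fun_prop
  have e2 : Continuous fun p : {p : X × X // p.1 ≠ p.2} => (p.1.1, p.1.2, (1 : ℝ)) := by
    fun_prop
  have e3 : Continuous fun p : {p : X × X // p.1 ≠ p.2} => (p.1.2, p.1.1, (1 : ℝ)) := by
    fun_prop
  have e4 : Continuous fun p : {p : X × X // p.1 ≠ p.2} => (p.1.2, p.1.2, (0 : ℝ)) := by
    fun_prop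
  rintro S ⟨U, hU, rfl | rfl⟩
  · convert (hU.preimage e1).inter ((hU.preimage e2).inter
      ((hU.preimage e3).inter (hU.preimage e4))) using 1
    ext p
    simp [twoPt_graph p.1 p.2, Set.insert_subset_iff]
  · convert (hU.preimage e1).union ((hU.preimage e2).union
      ((hU.preimage e3).union (hU.preimage e4))) using 1
    ext p
    simp [twoPt_graph p.1 p.2, Set.Nonempty, or_and_right, exists_or]

theorem stmt_13
    (X : Type*) [TopologicalSpace X] [CompactSpace X] [T2Space X]
    -- u is a continuous extension operator PM → PM(X)
    (u : PartialCPM X → CPM X) (hu_cont : Continuous u)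
    (hu_ext : ∀ (ρ : PartialCPM X) (x y : X), x ∈ ρ.dom → y ∈ ρ.dom →
      (u ρ).d x y = ρ.d x y) :
    -- there is a continuous map Ψ : (X × X) ∖ Δ_X → PM(X) with Ψ_{(x,y)}(x,y) = 1,
    -- namely Ψ_{(x,y)} = u(v_{(x,y)}) where v_{(x,y)} is the pseudometric on
    -- {x,y} with v_{(x,y)}(x,y) = 1
    ∃ Ψ : {p : X × X // p.1 ≠ p.2} → CPM X, Continuous Ψ ∧
      (∀ p : {p : X × X // p.1 ≠ p.2}, (Ψ p).d p.1.1 p.1.2 = 1) ∧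
      (∀ p : {p : X × X // p.1 ≠ p.2}, ∃ v : PartialCPM X,
        v.dom = {p.1.1, p.1.2} ∧ v.d p.1.1 p.1.2 = 1 ∧ Ψ p = u v) := by
  have hd : ∀ p : {p : X × X // p.1 ≠ p.2}, (twoPt p.1).d p.1.1 p.1.2 = 1 :=
    fun p => if_neg p.2
  refine ⟨fun p => u (twoPt p.1), hu_cont.comp twoPt_continuous, fun p => ?_,
    fun p => ⟨twoPt p.1, rfl, hd p, rfl⟩⟩
  exact (hu_ext _ _ _ (by simp [twoPt]) (by simp [twoPt])).trans (hd p)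

end
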